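/- Suppose n > 2r. Define the upper confidence bound U_{n,r}(x) = θ̂_r^{GT}(X_n) + [√(2/C(n,2r)) + 2√2/C(n,r)]·√(C_{n,r}·x) + [4/√C(n,2r) + (26/3)/C(n,r)]·x + ((x + log n)/n)^r · 2^{r+1}·x/3, where C(n,k) denotes the binomial coefficient. Then for every x > 0, with probability at least 1 − 7e^{−x} under P, θ_r(P;X_n) ≤ min(U_{n,r}(x), 1). -/

import Mathlib

/-!
Every symbol of the sample counts towards exactly one frequency, so resampling one coordinate cannot
raise the frequency of `j` and that of another symbol at once. Chebyshev's rearrangement argument,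
applied one coordinate at a time, turns this into negative association: for monotone functions `g j`
(or for antitone ones) the expectation of `∏ g j (freq ω j)` is at most the product of the
expectations. Hence weighted counts of the events `k ≤ freq ω j`, or of the events `freq ω j = 0`,
satisfy Bernstein's inequality as if these events were independent.

The Good–Turing link is `p ^ k * (1 - p) ^ n ≤ ℙ (freq ω j = k) / n.choose k`. It bounds the mean of
the missing mass by `(𝔼 C_{n,r} - 𝔼 C_{n,r+1}) / n.choose r`, and its variance proxy, where
`k = 2 * r`, by `𝔼 C_{n,r} / n.choose (2 * r)`. The summands of the missing mass are not small
enough for Bernstein's inequality, so `p j` is truncated at `a = (x + log n) / n`: up to an event of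
probability `exp (-x)` all symbols with `a ≤ p j` are seen and the truncation changes nothing. The
lower tail of `C_{n,r}` and the upper tail of `C_{n,r+1}` make the resulting bound observable.
-/

open MeasureTheory ProbabilityTheory Real Filter

noncomputable section

/-- The law of an i.i.d. sample of size `n` from the discrete distribution `P` on `ℕ`. -/
def sampleMeasure (P : PMF ℕ) (n : ℕ) : Measure (Fin n → ℕ) :=
  Measure.pi fun _ => P.toMeasure

/-- The probability mass of symbol `j` under `P`, as a real number. -/
def pReal (P : PMF ℕ) (j : ℕ) : ℝ := (P j).toReal

/-- Empirical frequency of the symbol `j` in the sample `ω`. -/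
def freq {n : ℕ} (ω : Fin n → ℕ) (j : ℕ) : ℕ :=
  (Finset.univ.filter fun i => ω i = j).card

/-- The `r`-order missing mass `θ_r(P; X_n)`. -/
def missingMass (p : ℕ → ℝ) (r : ℕ) {n : ℕ} (ω : Fin n → ℕ) : ℝ :=
  ∑' j, p j ^ r * (if freq ω j = 0 then 1 else 0)

/-- `M_{n,r}`: the number of distinct symbols appearing exactly `r` times in the sample. -/
def Mcount {n : ℕ} (ω : Fin n → ℕ) (r : ℕ) : ℝ :=
  ∑' j, if freq ω j = r then 1 else 0

/-- `C_{n,r}`: the number of distinct symbols appearing at least `r` times in the sample. -/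
def Ccount {n : ℕ} (ω : Fin n → ℕ) (r : ℕ) : ℝ :=
  ∑' j, if r ≤ freq ω j then 1 else 0

/-- The Good–Turing-type estimator `θ̂_r^{GT}(X_n) = M_{n,r} / (n choose r)`. -/
def gtEst {n : ℕ} (ω : Fin n → ℕ) (r : ℕ) : ℝ := Mcount ω r / (n.choose r)

/-- The upper confidence bound `𝔘_{n,r}(x)`. -/
def Ubound {n : ℕ} (r : ℕ) (x : ℝ) (ω : Fin n → ℕ) : ℝ :=
  gtEst ω r
    + (Real.sqrt (2 / (n.choose (2 * r))) + 2 * Real.sqrt 2 / (n.choose r))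
        * Real.sqrt (Ccount ω r * x)
    + (4 / Real.sqrt (n.choose (2 * r)) + (26 / 3) / (n.choose r)) * x
    + ((x + Real.log n) / n) ^ r * (2 ^ (r + 1) * x / 3)

open scoped ENNReal

section Association

lemma mul_add_mul_le_mul_add_mul_of_antivary {α : Type*} {f g : α → ℝ≥0∞} (h : Antivary f g)
    (a b : α) : f a * g a + f b * g b ≤ f a * g b + f b * g a := by
  wlog hab : g a ≤ g b generalizing a b
  · simpa only [add_comm] using this b a (le_of_not_ge hab)
  obtain hlt | heq := hab.lt_or_eq
  · obtain ⟨c, hc⟩ := exists_add_of_le (h hlt)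
    obtain ⟨d, hd⟩ := exists_add_of_le hab
    rw [hc, hd]
    calc (f b + c) * g a + f b * (g a + d)
        ≤ (f b + c) * g a + f b * (g a + d) + c * d := le_self_add
      _ = (f b + c) * (g a + d) + f b * g a := by ring
  · rw [heq]

/- Chebyshev's argument: integrate the rearrangement inequality over two independent copies. -/
lemma lintegral_mul_le_of_antivary {α : Type*} [MeasurableSpace α] {μ : Measure α}
    [IsProbabilityMeasure μ] {f g : α → ℝ≥0∞} (hf : Measurable f) (hg : Measurable g)
    (h : Antivary f g) : ∫⁻ a, f a * g a ∂μ ≤ (∫⁻ a, f a ∂μ) * ∫⁻ a, g a ∂μ := by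
  have hdouble : 2 * ∫⁻ a, f a * g a ∂μ ≤ 2 * ((∫⁻ a, f a ∂μ) * ∫⁻ a, g a ∂μ) :=
    calc 2 * ∫⁻ a, f a * g a ∂μ
        = ∫⁻ a, ∫⁻ b, (f a * g a + f b * g b) ∂μ ∂μ := by
          simp_rw [lintegral_add_left measurable_const]
          rw [lintegral_add_right _ measurable_const]
          simp [two_mul]
      _ ≤ ∫⁻ a, ∫⁻ b, (f a * g b + f b * g a) ∂μ ∂μ :=
          lintegral_mono fun a ↦ lintegral_mono (mul_add_mul_le_mul_add_mul_of_antivary h a)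
      _ = 2 * ((∫⁻ a, f a ∂μ) * ∫⁻ a, g a ∂μ) := by
          simp_rw [lintegral_add_left (hg.const_mul _), lintegral_const_mul _ hg,
            lintegral_mul_const _ hf]
          rw [lintegral_add_left (hf.mul_const _), lintegral_mul_const _ hf,
            lintegral_const_mul _ hg, two_mul]
  exact (ENNReal.mul_le_mul_iff_right two_ne_zero ENNReal.ofNat_ne_top).1 hdouble

lemma antivary_lintegral {α β : Type*} [MeasurableSpace β] {ν : Measure β} {F G : α → β → ℝ≥0∞}
    (h : ∀ y z, Antivary (F · y) (G · z)) :
    Antivary (fun a ↦ ∫⁻ y, F a y ∂ν) (fun a ↦ ∫⁻ y, G a y ∂ν) := by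
  intro a b hab
  obtain ⟨z, hz⟩ : ∃ z, G a z < G b z := by
    by_contra! hle
    exact hab.not_ge (lintegral_mono hle)
  exact lintegral_mono fun y ↦ h y z hz

variable {ι : Type*} [DecidableEq ι] {α : ι → Type*} [∀ i, MeasurableSpace (α i)]
  (μ : ∀ i, Measure (α i)) {F G : (∀ i, α i) → ℝ≥0∞}

lemma antivary_lmarginal_update [∀ i, SigmaFinite (μ i)] (hF : Measurable F) (hG : Measurable G)
    {i : ι} (h : ∀ ω ω', Antivary (fun a ↦ F (Function.update ω i a))
      (fun a ↦ G (Function.update ω' i a))) {s : Finset ι} (hi : i ∉ s) (ω ω' : ∀ i, α i) :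
    Antivary (fun a ↦ (∫⋯∫⁻_s, F ∂μ) (Function.update ω i a))
      (fun a ↦ (∫⋯∫⁻_s, G ∂μ) (Function.update ω' i a)) := by
  simp only [lmarginal_update_of_notMem hF hi, lmarginal_update_of_notMem hG hi]
  exact antivary_lintegral fun _ _ ↦ h _ _

lemma lmarginal_mul_le_of_antivary_update [∀ i, IsProbabilityMeasure (μ i)] (hF : Measurable F)
    (hG : Measurable G) (h : ∀ i ω ω', Antivary (fun a ↦ F (Function.update ω i a))
      (fun a ↦ G (Function.update ω' i a))) (s : Finset ι) (ω : ∀ i, α i) :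
    (∫⋯∫⁻_s, F * G ∂μ) ω ≤ (∫⋯∫⁻_s, F ∂μ) ω * (∫⋯∫⁻_s, G ∂μ) ω := by
  induction s using Finset.induction_on generalizing ω with
  | empty => simp
  | insert i s hi ih =>
    rw [lmarginal_insert _ (hF.mul hG) hi, lmarginal_insert _ hF hi, lmarginal_insert _ hG hi]
    exact (lintegral_mono fun a ↦ ih _).trans <| lintegral_mul_le_of_antivary
      ((hF.lmarginal μ).comp (measurable_update ω)) ((hG.lmarginal μ).comp (measurable_update ω))
      (antivary_lmarginal_update μ hF hG (h i) hi ω ω)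

theorem lintegral_pi_mul_le_of_antivary_update [Fintype ι] [∀ i, IsProbabilityMeasure (μ i)]
    (hF : Measurable F) (hG : Measurable G)
    (h : ∀ i ω ω', Antivary (fun a ↦ F (Function.update ω i a))
      (fun a ↦ G (Function.update ω' i a))) :
    ∫⁻ ω, F ω * G ω ∂Measure.pi μ ≤ (∫⁻ ω, F ω ∂Measure.pi μ) * ∫⁻ ω, G ω ∂Measure.pi μ := by
  have ω₀ : ∀ i, α i := fun i ↦ (nonempty_of_isProbabilityMeasure (μ i)).some
  simp only [lintegral_eq_lmarginal_univ ω₀]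
  exact lmarginal_mul_le_of_antivary_update μ hF hG h Finset.univ ω₀

end Association

section Chernoff

/-- Exponential moments of weighted counts of the events `A j`, with weights `t` of constant sign,
are at most what they would be for independent events. This is the only consequence of negative
association needed for Chernoff-type bounds. -/
def HasSubmulMGF {Ω ι : Type*} [MeasurableSpace Ω] (μ : Measure Ω) (A : ι → Set Ω) : Prop :=
  ∀ t : ι → ℝ, 0 ≤ t ∨ t ≤ 0 → ∀ J : Finset ι,
    ∫⁻ ω, ∏ j ∈ J, ENNReal.ofReal (exp ((A j).indicator (fun _ ↦ t j) ω)) ∂μ ≤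
      ∏ j ∈ J, ∫⁻ ω, ENNReal.ofReal (exp ((A j).indicator (fun _ ↦ t j) ω)) ∂μ

variable {Ω : Type*} [MeasurableSpace Ω] {μ : Measure Ω} {ι : Type*} {A : ι → Set Ω}

lemma tendsto_ofReal_exp_sum {f : ι → ℝ} (hf : Summable f) :
    Tendsto (fun J : Finset ι ↦ ENNReal.ofReal (exp (∑ j ∈ J, f j))) atTop
      (nhds (ENNReal.ofReal (exp (∑' j, f j)))) :=
  ((ENNReal.continuous_ofReal.comp continuous_exp).tendsto _).comp hf.hasSum

lemma aemeasurable_tsum_indicator [Countable ι] (hA : ∀ j, MeasurableSet (A j))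
    {t : ι → ℝ}
    (hS : ∀ᵐ ω ∂μ, Summable fun j ↦ (A j).indicator (fun _ ↦ t j) ω) :
    AEMeasurable (fun ω ↦ ∑' j, (A j).indicator (fun _ ↦ t j) ω) μ :=
  aemeasurable_of_tendsto_metrizable_ae atTop
    (fun J : Finset ι ↦ (Finset.measurable_sum J
      fun j _ ↦ measurable_const.indicator (hA j)).aemeasurable)
    (hS.mono fun _ h ↦ h.hasSum)

variable [IsProbabilityMeasure μ]

lemma lintegral_exp_indicator_le {B : Set Ω} (hB : MeasurableSet B) (t : ℝ) :
    ∫⁻ ω, ENNReal.ofReal (exp (B.indicator (fun _ ↦ t) ω)) ∂μ ≤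
      ENNReal.ofReal (exp (μ.real B * (exp t - 1))) := by
  have hexp : ∀ ω, exp (B.indicator (fun _ ↦ t) ω) = 1 + B.indicator (fun _ ↦ exp t - 1) ω :=
    fun ω ↦ by by_cases h : ω ∈ B <;> simp [h]
  have hint : Integrable (B.indicator fun _ ↦ exp t - 1) μ := (integrable_const _).indicator hB
  rw [← ofReal_integral_eq_lintegral_ofReal _ (ae_of_all _ fun _ ↦ (exp_pos _).le)]
  · simp_rw [hexp]
    rw [integral_add (integrable_const _) hint, integral_indicator_const _ hB, integral_const,
      probReal_univ, one_smul, smul_eq_mul, add_comm]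
    exact ENNReal.ofReal_le_ofReal (add_one_le_exp _)
  · simp_rw [hexp]
    exact (integrable_const _).add hint

namespace HasSubmulMGF

variable [Countable ι]

lemma lintegral_exp_tsum_le (h : HasSubmulMGF μ A) (hA : ∀ j, MeasurableSet (A j)) {t : ι → ℝ}
    (ht : 0 ≤ t ∨ t ≤ 0) (hS : ∀ᵐ ω ∂μ, Summable fun j ↦ (A j).indicator (fun _ ↦ t j) ω)
    (hq : Summable fun j ↦ μ.real (A j) * (exp (t j) - 1)) :
    ∫⁻ ω, ENNReal.ofReal (exp (∑' j, (A j).indicator (fun _ ↦ t j) ω)) ∂μ ≤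
      ENNReal.ofReal (exp (∑' j, μ.real (A j) * (exp (t j) - 1))) := by
  have hfin : ∀ J : Finset ι,
      ∫⁻ ω, ENNReal.ofReal (exp (∑ j ∈ J, (A j).indicator (fun _ ↦ t j) ω)) ∂μ ≤
        ENNReal.ofReal (exp (∑ j ∈ J, μ.real (A j) * (exp (t j) - 1))) := by
    intro J
    simp_rw [exp_sum, ENNReal.ofReal_prod_of_nonneg fun _ _ ↦ (exp_pos _).le]
    exact (h t ht J).trans (Finset.prod_le_prod' fun j _ ↦ lintegral_exp_indicator_le (hA j) (t j))
  calc ∫⁻ ω, ENNReal.ofReal (exp (∑' j, (A j).indicator (fun _ ↦ t j) ω)) ∂μ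
      = ∫⁻ ω, liminf (fun J : Finset ι ↦
          ENNReal.ofReal (exp (∑ j ∈ J, (A j).indicator (fun _ ↦ t j) ω))) atTop ∂μ :=
        lintegral_congr_ae (hS.mono fun _ h ↦ (tendsto_ofReal_exp_sum h).liminf_eq.symm)
    _ ≤ liminf (fun J : Finset ι ↦
          ∫⁻ ω, ENNReal.ofReal (exp (∑ j ∈ J, (A j).indicator (fun _ ↦ t j) ω)) ∂μ) atTop :=
        lintegral_liminf_le fun J ↦ (Finset.measurable_sum J fun j _ ↦
          measurable_const.indicator (hA j)).exp.ennreal_ofReal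
    _ ≤ liminf (fun J : Finset ι ↦
          ENNReal.ofReal (exp (∑ j ∈ J, μ.real (A j) * (exp (t j) - 1)))) atTop :=
        liminf_le_liminf (Eventually.of_forall hfin)
    _ = ENNReal.ofReal (exp (∑' j, μ.real (A j) * (exp (t j) - 1))) :=
        (tendsto_ofReal_exp_sum hq).liminf_eq

theorem measure_chernoff_le (h : HasSubmulMGF μ A) (hA : ∀ j, MeasurableSet (A j)) {w : ι → ℝ}
    (hw : 0 ≤ w) (l : ℝ) (hS : ∀ᵐ ω ∂μ, Summable fun j ↦ (A j).indicator (fun _ ↦ w j) ω)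
    (hq : Summable fun j ↦ μ.real (A j) * (exp (l * w j) - 1)) (x : ℝ) :
    μ {ω | ∑' j, μ.real (A j) * (exp (l * w j) - 1) + x ≤
      l * ∑' j, (A j).indicator (fun _ ↦ w j) ω} ≤ ENNReal.ofReal (exp (-x)) := by
  set Λ := ∑' j, μ.real (A j) * (exp (l * w j) - 1)
  have hind : ∀ ω j, (A j).indicator (fun _ ↦ l * w j) ω = l * (A j).indicator (fun _ ↦ w j) ω :=
    fun ω j ↦ Set.indicator_const_mul _ _ _ _
  have hlS : ∀ᵐ ω ∂μ, Summable fun j ↦ (A j).indicator (fun _ ↦ l * w j) ω :=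
    hS.mono fun ω hω ↦ (hω.mul_left l).congr fun j ↦ (hind ω j).symm
  have hsign : (0 ≤ fun j ↦ l * w j) ∨ (fun j ↦ l * w j) ≤ 0 :=
    (le_total 0 l).imp (fun hl j ↦ mul_nonneg hl (hw j))
      fun hl j ↦ mul_nonpos_of_nonpos_of_nonneg hl (hw j)
  calc μ {ω | Λ + x ≤ l * ∑' j, (A j).indicator (fun _ ↦ w j) ω}
      = μ {ω | ENNReal.ofReal (exp (Λ + x)) ≤
          ENNReal.ofReal (exp (∑' j, (A j).indicator (fun _ ↦ l * w j) ω))} := by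
        simp only [hind, tsum_mul_left, ENNReal.ofReal_le_ofReal_iff (exp_pos _).le, exp_le_exp]
    _ ≤ (∫⁻ ω, ENNReal.ofReal (exp (∑' j, (A j).indicator (fun _ ↦ l * w j) ω)) ∂μ) /
          ENNReal.ofReal (exp (Λ + x)) :=
        meas_ge_le_lintegral_div (aemeasurable_tsum_indicator hA hlS).exp.ennreal_ofReal
          (by simp [exp_pos]) ENNReal.ofReal_ne_top
    _ ≤ ENNReal.ofReal (exp Λ) / ENNReal.ofReal (exp (Λ + x)) := by
        gcongr
        exact h.lintegral_exp_tsum_le hA hsign hlS hq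
    _ = ENNReal.ofReal (exp (-x)) := by
        rw [← ENNReal.ofReal_div_of_pos (exp_pos _), ← exp_sub, sub_add_cancel_left]

end HasSubmulMGF

end Chernoff

section Bernstein

lemma exp_sub_one_le_add_sq_div {u c : ℝ} (hu : 0 ≤ u) (huc : u ≤ c) (hc : c < 1) :
    exp u - 1 ≤ u + u ^ 2 / (2 * (1 - c)) := by
  have hcubic : exp u ≤ 1 + u + u ^ 2 * (1 + u) / 2 := by
    have h := exp_bound' hu (huc.trans hc.le) (n := 3) (by norm_num)
    simp only [Finset.sum_range_succ, Finset.sum_range_zero, Nat.factorial] at h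
    norm_num at h
    nlinarith [pow_nonneg hu 3]
  have hgeom : u ^ 2 * (1 + u) / 2 ≤ u ^ 2 / (2 * (1 - c)) := by
    rw [div_le_div_iff₀ two_pos (by linarith)]
    have : (1 + u) * (1 - c) ≤ 1 := by nlinarith
    nlinarith [sq_nonneg u]
  linarith

lemma exp_neg_sub_one_le_neg_add_sq_div_two {u : ℝ} (hu : 0 ≤ u) :
    exp (-u) - 1 ≤ -u + u ^ 2 / 2 := by
  have hpos : 0 < 1 - u + u ^ 2 / 2 := by nlinarith [sq_nonneg (u - 1)]
  have hinv : 1 ≤ (1 - u + u ^ 2 / 2) * exp u := by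
    nlinarith [mul_le_mul_of_nonneg_left (quadratic_le_exp_of_nonneg hu) hpos.le, pow_nonneg hu 4]
  rw [← div_le_iff₀ (exp_pos u), one_div, ← exp_neg] at hinv
  linarith

/- The minimizer of `l ↦ (l ^ 2 * v / (2 * (1 - b * l)) + x) / l` is `l = s / (1 + b * s)` with
`s = √(2 * x / v)`. -/
lemma exists_subgamma_chernoff_parameter {b v x : ℝ} (hb : 0 ≤ b) (hv : 0 < v) (hx : 0 ≤ x) :
    ∃ l, 0 ≤ l ∧ b * l < 1 ∧ l ^ 2 / (2 * (1 - b * l)) * v + x = l * (√(2 * v * x) + b * x) := by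
  obtain ⟨s, hs, rfl⟩ : ∃ s, 0 ≤ s ∧ x = v * s ^ 2 / 2 :=
    ⟨√(2 * x / v), sqrt_nonneg _, by rw [sq_sqrt (by positivity)]; field_simp⟩
  have hsqrt : √(2 * v * (v * s ^ 2 / 2)) = v * s := by
    rw [show 2 * v * (v * s ^ 2 / 2) = (v * s) ^ 2 by ring, sqrt_sq (by positivity)]
  have hone : 1 - b * (s / (1 + b * s)) = 1 / (1 + b * s) := by field_simp; ring
  refine ⟨s / (1 + b * s), by positivity, ?_, ?_⟩
  · rw [← sub_pos, hone]
    positivity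
  · rw [hone, hsqrt]
    field_simp
    ring

variable {Ω : Type*} [MeasurableSpace Ω] {μ : Measure Ω} [IsProbabilityMeasure μ]
  {ι : Type*} [Countable ι] {A : ι → Set Ω} {w : ι → ℝ} {m v x : ℝ}

namespace HasSubmulMGF

theorem measure_bernstein_upper_le (h : HasSubmulMGF μ A) (hA : ∀ j, MeasurableSet (A j)) {b : ℝ}
    (hw : 0 ≤ w) (hwb : ∀ j, w j ≤ b) (hb : 0 ≤ b) (hv : 0 < v) (hx : 0 ≤ x)
    (hS : ∀ᵐ ω ∂μ, Summable fun j ↦ (A j).indicator (fun _ ↦ w j) ω)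
    (hmean : Summable fun j ↦ μ.real (A j) * w j) (hm : ∑' j, μ.real (A j) * w j ≤ m)
    (hvar : ∑' j, μ.real (A j) * w j ^ 2 ≤ v) :
    μ {ω | m + √(2 * v * x) + b * x ≤ ∑' j, (A j).indicator (fun _ ↦ w j) ω} ≤
      ENNReal.ofReal (exp (-x)) := by
  obtain ⟨l, hl, hbl, hlx⟩ := exists_subgamma_chernoff_parameter hb hv hx
  set κ := l ^ 2 / (2 * (1 - b * l))
  have : 0 ≤ κ := div_nonneg (sq_nonneg _) (by linarith)
  have hsq : Summable fun j ↦ μ.real (A j) * w j ^ 2 :=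
    (hmean.mul_left b).of_nonneg_of_le (fun j ↦ by positivity) fun j ↦ by
      rw [sq, mul_left_comm b]
      gcongr
      exacts [hw j, hwb j]
  have hterm : ∀ j, μ.real (A j) * (exp (l * w j) - 1) ≤
      l * (μ.real (A j) * w j) + κ * (μ.real (A j) * w j ^ 2) := fun j ↦ by
    have hle : l * w j ≤ b * l := by
      rw [mul_comm b]
      gcongr
      exact hwb j
    calc μ.real (A j) * (exp (l * w j) - 1)
        ≤ μ.real (A j) * (l * w j + (l * w j) ^ 2 / (2 * (1 - b * l))) := by
          gcongr
          exact exp_sub_one_le_add_sq_div (mul_nonneg hl (hw j)) hle hbl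
      _ = l * (μ.real (A j) * w j) + κ * (μ.real (A j) * w j ^ 2) := by ring
  have hdom := (hmean.mul_left l).add (hsq.mul_left κ)
  have hq : Summable fun j ↦ μ.real (A j) * (exp (l * w j) - 1) :=
    hdom.of_nonneg_of_le (fun j ↦ mul_nonneg measureReal_nonneg
      (sub_nonneg.2 (one_le_exp (mul_nonneg hl (hw j))))) hterm
  have hΛ : ∑' j, μ.real (A j) * (exp (l * w j) - 1) ≤ l * m + κ * v := by
    refine (hq.tsum_le_tsum hterm hdom).trans ?_
    rw [(hmean.mul_left l).tsum_add (hsq.mul_left κ), tsum_mul_left, tsum_mul_left]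
    gcongr
  refine (measure_mono fun ω hω ↦ ?_).trans (h.measure_chernoff_le hA hw l hS hq x)
  have := mul_le_mul_of_nonneg_left hω.out hl
  rw [Set.mem_ofPred_eq]
  linarith

theorem measure_bernstein_lower_le (h : HasSubmulMGF μ A) (hA : ∀ j, MeasurableSet (A j))
    (hw : 0 ≤ w) (hv : 0 < v) (hx : 0 ≤ x)
    (hS : ∀ᵐ ω ∂μ, Summable fun j ↦ (A j).indicator (fun _ ↦ w j) ω)
    (hmean : Summable fun j ↦ μ.real (A j) * w j) (hm : m ≤ ∑' j, μ.real (A j) * w j)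
    (hsq : Summable fun j ↦ μ.real (A j) * w j ^ 2) (hvar : ∑' j, μ.real (A j) * w j ^ 2 ≤ v) :
    μ {ω | ∑' j, (A j).indicator (fun _ ↦ w j) ω ≤ m - √(2 * v * x)} ≤
      ENNReal.ofReal (exp (-x)) := by
  obtain ⟨l, hl, -, hlx⟩ := exists_subgamma_chernoff_parameter le_rfl hv hx
  simp only [zero_mul, sub_zero, mul_one, add_zero] at hlx
  have hterm : ∀ j, μ.real (A j) * (exp (-l * w j) - 1) ≤
      -l * (μ.real (A j) * w j) + l ^ 2 / 2 * (μ.real (A j) * w j ^ 2) := fun j ↦ by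
    calc μ.real (A j) * (exp (-l * w j) - 1)
        ≤ μ.real (A j) * (-(l * w j) + (l * w j) ^ 2 / 2) := by
          rw [neg_mul]
          gcongr
          exact exp_neg_sub_one_le_neg_add_sq_div_two (mul_nonneg hl (hw j))
      _ = -l * (μ.real (A j) * w j) + l ^ 2 / 2 * (μ.real (A j) * w j ^ 2) := by ring
  have hdom := (hmean.mul_left (-l)).add (hsq.mul_left (l ^ 2 / 2))
  have hq : Summable fun j ↦ μ.real (A j) * (exp (-l * w j) - 1) := by
    refine (hmean.mul_left l).of_norm_bounded fun j ↦ ?_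
    have hle : exp (-l * w j) ≤ 1 := exp_le_one_iff.2 (by nlinarith [mul_nonneg hl (hw j)])
    rw [norm_eq_abs, abs_mul, abs_of_nonneg measureReal_nonneg, abs_of_nonpos (by linarith),
      mul_left_comm l]
    gcongr
    linarith [add_one_le_exp (-l * w j)]
  have hΛ : ∑' j, μ.real (A j) * (exp (-l * w j) - 1) ≤ -l * m + l ^ 2 / 2 * v := by
    refine (hq.tsum_le_tsum hterm hdom).trans ?_
    rw [(hmean.mul_left (-l)).tsum_add (hsq.mul_left _), tsum_mul_left, tsum_mul_left]
    exact add_le_add (mul_le_mul_of_nonpos_left hm (by linarith)) (by gcongr)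
  refine (measure_mono fun ω hω ↦ ?_).trans (h.measure_chernoff_le hA hw (-l) hS hq x)
  have := mul_le_mul_of_nonneg_left hω.out hl
  rw [Set.mem_ofPred_eq]
  linarith

end HasSubmulMGF

end Bernstein

section Sampling

variable (P : PMF ℕ) (n : ℕ)

instance isProbabilityMeasure_sampleMeasure : IsProbabilityMeasure (sampleMeasure P n) := by
  unfold sampleMeasure
  infer_instance

lemma pReal_nonneg (j : ℕ) : 0 ≤ pReal P j := ENNReal.toReal_nonneg

lemma pReal_le_one (j : ℕ) : pReal P j ≤ 1 :=
  ENNReal.toReal_mono ENNReal.one_ne_top (P.coe_le_one j)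

lemma hasSum_pReal : HasSum (pReal P) 1 := by
  have h := ENNReal.hasSum_toReal P.tsum_coe_ne_top
  rwa [← ENNReal.tsum_toReal_eq P.apply_ne_top, P.tsum_coe, ENNReal.toReal_one] at h

lemma measureReal_toMeasure_singleton (j : ℕ) : P.toMeasure.real {j} = pReal P j := by
  rw [measureReal_def, P.toMeasure_apply_singleton j (measurableSet_singleton j), pReal]

variable {P n}

lemma freq_update_le (ω : Fin n → ℕ) (i : Fin n) {a j : ℕ} (h : a ≠ j) (b : ℕ) :
    freq (Function.update ω i a) j ≤ freq (Function.update ω i b) j := by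
  refine Finset.card_le_card fun k hk ↦ ?_
  rcases eq_or_ne k i with rfl | hki
  · simp [h] at hk
  · simpa [hki] using hk

lemma freq_eq_zero_iff {ω : Fin n → ℕ} {j : ℕ} : freq ω j = 0 ↔ j ∉ Set.range ω := by
  simp [freq, Finset.filter_eq_empty_iff]

end Sampling

section Indicator

variable {α : Type*} [Preorder α] {K : Set α}

lemma monotone_indicator_const {M : Type*} [Zero M] [Preorder M] (hK : IsUpperSet K) {t : M}
    (ht : 0 ≤ t) : Monotone (K.indicator fun _ ↦ t) := fun a b hab ↦ by
  by_cases ha : a ∈ K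
  · simp [ha, hK hab ha]
  · simpa [ha] using Set.indicator_nonneg (fun _ _ ↦ ht) b

lemma antitone_indicator_const {M : Type*} [Zero M] [Preorder M] (hK : IsLowerSet K) {t : M}
    (ht : 0 ≤ t) : Antitone (K.indicator fun _ ↦ t) :=
  (monotone_indicator_const (α := αᵒᵈ) hK.toDual ht).dual_left

lemma indicator_const_monotone_or_antitone (hK : IsUpperSet K ∨ IsLowerSet K) {ι : Type*}
    {t : ι → ℝ} (ht : 0 ≤ t ∨ t ≤ 0) :
    (∀ j, Monotone (K.indicator fun _ ↦ t j)) ∨ ∀ j, Antitone (K.indicator fun _ ↦ t j) := by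
  have hneg (j : ι) : (K.indicator fun _ ↦ t j) = fun a ↦ -(K.indicator (fun _ ↦ -t j) a) := by
    ext a
    by_cases ha : a ∈ K <;> simp [ha]
  obtain ht | ht := ht
  · exact hK.imp (fun hK j ↦ monotone_indicator_const hK (ht j))
      fun hK j ↦ antitone_indicator_const hK (ht j)
  · simp only [hneg]
    exact hK.symm.imp (fun hK j ↦ (antitone_indicator_const hK (neg_nonneg.2 (ht j))).neg)
      fun hK j ↦ (monotone_indicator_const hK (neg_nonneg.2 (ht j))).neg

end Indicator

section NegativeAssociation

variable {n : ℕ} {g : ℕ → ℕ → ℝ≥0∞}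

lemma antivary_freq_update_prod_freq_update (hg : (∀ k, Monotone (g k)) ∨ ∀ k, Antitone (g k))
    {j : ℕ} {J : Finset ℕ} (hj : j ∉ J) (i : Fin n) (ω ω' : Fin n → ℕ) :
    Antivary (fun a ↦ g j (freq (Function.update ω i a) j))
      (fun a ↦ ∏ k ∈ J, g k (freq (Function.update ω' i a) k)) := by
  intro a b hab
  have hne {k : ℕ} (hk : k ∈ J) : j ≠ k := fun h ↦ hj (h ▸ hk)
  obtain hg | hg := hg
  · refine hg j (freq_update_le ω i ?_ a)
    rintro rfl
    exact hab.not_ge (Finset.prod_le_prod' fun k hk ↦ hg k (freq_update_le ω' i (hne hk) a))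
  · refine hg j (freq_update_le ω i ?_ b)
    rintro rfl
    exact hab.not_ge (Finset.prod_le_prod' fun k hk ↦ hg k (freq_update_le ω' i (hne hk) b))

theorem lintegral_prod_freq_le (P : PMF ℕ) (hg : (∀ k, Monotone (g k)) ∨ ∀ k, Antitone (g k))
    (J : Finset ℕ) :
    ∫⁻ ω, ∏ j ∈ J, g j (freq ω j) ∂sampleMeasure P n ≤
      ∏ j ∈ J, ∫⁻ ω, g j (freq ω j) ∂sampleMeasure P n := by
  induction J using Finset.induction_on with
  | empty => simp
  | insert j J hj ih =>
    simp only [Finset.prod_insert hj]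
    exact (lintegral_pi_mul_le_of_antivary_update _ .of_discrete .of_discrete
      fun i ↦ antivary_freq_update_prod_freq_update hg hj i).trans (mul_le_mul_right ih _)

theorem hasSubmulMGF_freq (P : PMF ℕ) {K : Set ℕ} (hK : IsUpperSet K ∨ IsLowerSet K) :
    HasSubmulMGF (sampleMeasure P n) (fun j ↦ {ω | freq ω j ∈ K}) := by
  intro t ht J
  have hexp : Monotone fun y : ℝ ↦ ENNReal.ofReal (exp y) :=
    ENNReal.ofReal_mono.comp exp_monotone
  exact lintegral_prod_freq_le P ((indicator_const_monotone_or_antitone hK ht).imp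
    (fun h j ↦ hexp.comp (h j)) fun h j ↦ hexp.comp_antitone (h j)) J

end NegativeAssociation

section Occupancy

section Binomial

variable {ι α : Type*} [Fintype ι] {B : Set α} [DecidablePred (· ∈ B)]

lemma setOf_filter_mem_eq [DecidableEq ι] (S : Finset ι) :
    {ω : ι → α | (Finset.univ.filter fun i ↦ ω i ∈ B) = S} =
      Set.univ.pi fun i ↦ if i ∈ S then B else Bᶜ := by
  ext ω
  simp only [Finset.ext_iff, Finset.mem_filter_univ, Set.mem_ofPred_eq, Set.mem_univ_pi]
  refine forall_congr' fun i ↦ ?_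
  by_cases hi : i ∈ S <;> simp [hi]

variable [MeasurableSpace α]

lemma measurableSet_setOf_filter_mem_eq (hB : MeasurableSet B) (S : Finset ι) :
    MeasurableSet {ω : ι → α | (Finset.univ.filter fun i ↦ ω i ∈ B) = S} := by
  classical
  rw [setOf_filter_mem_eq]
  exact .univ_pi fun i ↦ by split_ifs; exacts [hB, hB.compl]

variable {ν : Measure α} [IsProbabilityMeasure ν]

lemma measureReal_pi_filter_mem_eq (hB : MeasurableSet B) (S : Finset ι) :
    (Measure.pi fun _ : ι ↦ ν).real {ω | (Finset.univ.filter fun i ↦ ω i ∈ B) = S} =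
      ν.real B ^ S.card * (1 - ν.real B) ^ (Fintype.card ι - S.card) := by
  classical
  rw [setOf_filter_mem_eq, measureReal_def, Measure.pi_pi, ENNReal.toReal_prod,
    ← Finset.prod_mul_prod_compl S, ← Finset.card_compl]
  congr 1
  · exact Finset.prod_eq_pow_card fun i hi ↦ by rw [if_pos hi, measureReal_def]
  · refine Finset.prod_eq_pow_card fun i hi ↦ ?_
    rw [if_neg (Finset.mem_compl.1 hi), ← measureReal_def, probReal_compl_eq_one_sub hB]

theorem measureReal_pi_card_filter_mem_eq (hB : MeasurableSet B) (k : ℕ) :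
    (Measure.pi fun _ : ι ↦ ν).real {ω | (Finset.univ.filter fun i ↦ ω i ∈ B).card = k} =
      (Fintype.card ι).choose k * (ν.real B ^ k * (1 - ν.real B) ^ (Fintype.card ι - k)) := by
  have hunion : {ω : ι → α | (Finset.univ.filter fun i ↦ ω i ∈ B).card = k} =
      ⋃ S ∈ Finset.powersetCard k Finset.univ,
        {ω | (Finset.univ.filter fun i ↦ ω i ∈ B) = S} := by
    ext ω
    simp
  rw [hunion, measureReal_biUnion_finset]
  · rw [Finset.sum_congr rfl fun S hS ↦ by
      rw [measureReal_pi_filter_mem_eq hB, (Finset.mem_powersetCard.1 hS).2]]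
    simp
  · exact fun S _ T _ hST ↦ Set.disjoint_left.2 fun ω hS hT ↦ hST (hS.symm.trans hT)
  · exact fun S _ ↦ measurableSet_setOf_filter_mem_eq hB S

end Binomial

/-- The probability that the number of occurrences of the symbol `j` in a sample of size `n` belongs
to `K`; for instance `K = {0}` for the event that `j` is not seen. -/
def occupancyProb (P : PMF ℕ) (n : ℕ) (K : Set ℕ) (j : ℕ) : ℝ :=
  (sampleMeasure P n).real {ω | freq ω j ∈ K}

variable {P : PMF ℕ} {n : ℕ}

lemma occupancyProb_nonneg (K : Set ℕ) (j : ℕ) : 0 ≤ occupancyProb P n K j := measureReal_nonneg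

lemma occupancyProb_mono {K L : Set ℕ} (h : K ⊆ L) (j : ℕ) :
    occupancyProb P n K j ≤ occupancyProb P n L j :=
  measureReal_mono fun _ hω ↦ h hω

lemma occupancyProb_singleton (k j : ℕ) :
    occupancyProb P n {k} j = n.choose k * (pReal P j ^ k * (1 - pReal P j) ^ (n - k)) := by
  have h := measureReal_pi_card_filter_mem_eq (ι := Fin n) (ν := P.toMeasure)
    (measurableSet_singleton j) k
  rw [measureReal_toMeasure_singleton, Fintype.card_fin] at h
  exact h

lemma occupancyProb_zero (j : ℕ) : occupancyProb P n {0} j = (1 - pReal P j) ^ n := by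
  simp [occupancyProb_singleton]

lemma occupancyProb_Ici_eq_add (k j : ℕ) :
    occupancyProb P n (Set.Ici k) j =
      occupancyProb P n {k} j + occupancyProb P n (Set.Ici (k + 1)) j := by
  have hsplit : {ω : Fin n → ℕ | freq ω j ∈ Set.Ici k} =
      {ω | freq ω j ∈ ({k} : Set ℕ)} ∪ {ω | freq ω j ∈ Set.Ici (k + 1)} := by
    ext ω
    simp only [Set.mem_Ici, Set.mem_singleton_iff, Set.mem_union, Set.mem_ofPred_eq]
    omega
  rw [occupancyProb, hsplit, measureReal_union ?_ .of_discrete, occupancyProb, occupancyProb]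
  exact Set.disjoint_left.2 fun ω (h : freq ω j = k) (h' : k + 1 ≤ freq ω j) ↦ by omega

lemma occupancyProb_Ici_le {k : ℕ} (hk : 1 ≤ k) (j : ℕ) :
    occupancyProb P n (Set.Ici k) j ≤ n * pReal P j := by
  have hbernoulli : 1 + n * -pReal P j ≤ (1 - pReal P j) ^ n :=
    one_add_mul_le_pow (by linarith [pReal_le_one P j]) n
  have hone : occupancyProb P n (Set.Ici 0) j = 1 := by simp [occupancyProb]
  have hsplit := occupancyProb_Ici_eq_add (P := P) (n := n) 0 j
  rw [hone, occupancyProb_zero, zero_add] at hsplit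
  linarith [occupancyProb_mono (P := P) (n := n) (Set.Ici_subset_Ici.2 hk) j]

lemma summable_occupancyProb_Ici {k : ℕ} (hk : 1 ≤ k) :
    Summable (occupancyProb P n (Set.Ici k)) :=
  ((hasSum_pReal P).summable.mul_left _).of_nonneg_of_le (fun j ↦ occupancyProb_nonneg _ j)
    fun j ↦ occupancyProb_Ici_le hk j

lemma pReal_pow_mul_occupancyProb_zero_le {k : ℕ} (hk : k ≤ n) (j : ℕ) :
    pReal P j ^ k * occupancyProb P n {0} j ≤ occupancyProb P n {k} j / n.choose k := by
  have hchoose : (n.choose k : ℝ) ≠ 0 := by exact_mod_cast (Nat.choose_pos hk).ne'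
  have := pReal_nonneg P j
  have := pReal_le_one P j
  rw [occupancyProb_zero, occupancyProb_singleton, mul_div_cancel_left₀ _ hchoose]
  gcongr ?_ * ?_
  exact pow_le_pow_of_le_one (by linarith) (by linarith) (n.sub_le k)

variable (P n)

/-- The expectation of `C_{n,k}`, written as the sum over all symbols of the probability of
occurring at least `k` times. -/
def expCcount (k : ℕ) : ℝ := ∑' j, occupancyProb P n (Set.Ici k) j

variable {P n}

lemma expCcount_nonneg (k : ℕ) : 0 ≤ expCcount P n k := tsum_nonneg (occupancyProb_nonneg _)

lemma expCcount_anti {k l : ℕ} (hk : 1 ≤ k) (hkl : k ≤ l) : expCcount P n l ≤ expCcount P n k :=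
  (summable_occupancyProb_Ici (hk.trans hkl)).tsum_le_tsum
    (fun j ↦ occupancyProb_mono (Set.Ici_subset_Ici.2 hkl) j) (summable_occupancyProb_Ici hk)

lemma expCcount_pos {k : ℕ} (hk : 1 ≤ k) (hkn : k ≤ n) : 0 < expCcount P n k := by
  obtain ⟨j, hj⟩ : ∃ j, 0 < pReal P j := by
    by_contra! hle
    have hzero : pReal P = 0 := funext fun j ↦ (hle j).antisymm (pReal_nonneg P j)
    exact zero_ne_one (hasSum_zero.unique (hzero ▸ hasSum_pReal P))
  refine (summable_occupancyProb_Ici hk).tsum_pos (occupancyProb_nonneg _) j ?_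
  calc 0 < occupancyProb P n {n} j := by simpa [occupancyProb_singleton] using pow_pos hj n
    _ ≤ occupancyProb P n (Set.Ici k) j := occupancyProb_mono (by simpa using hkn) j

end Occupancy

section Moments

variable {P : PMF ℕ} {n : ℕ} {w : ℕ → ℝ} {r : ℕ}

lemma pow_le_pReal (hw : 0 ≤ w) (hwp : w ≤ pReal P) (hr : 1 ≤ r) (j : ℕ) : w j ^ r ≤ pReal P j :=
  (pow_le_of_le_one (hw j) ((hwp j).trans (pReal_le_one P j)) (by omega)).trans (hwp j)

lemma summable_occupancyProb_mul_pow (hw : 0 ≤ w) (hwp : w ≤ pReal P) (hr : 1 ≤ r) (K : Set ℕ) :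
    Summable fun j ↦ occupancyProb P n K j * w j ^ r :=
  (hasSum_pReal P).summable.of_nonneg_of_le
    (fun j ↦ mul_nonneg (occupancyProb_nonneg K j) (pow_nonneg (hw j) r)) fun j ↦
    (mul_le_of_le_one_left (pow_nonneg (hw j) r) measureReal_le_one).trans
      (pow_le_pReal hw hwp hr j)

theorem tsum_occupancyProb_zero_mul_pow_le (hw : 0 ≤ w) (hwp : w ≤ pReal P) (hr : 1 ≤ r)
    (hrn : r ≤ n) :
    ∑' j, occupancyProb P n {0} j * w j ^ r ≤
      (expCcount P n r - expCcount P n (r + 1)) / n.choose r := by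
  have hsum := summable_occupancyProb_Ici (P := P) (n := n) hr
  have hsum' := summable_occupancyProb_Ici (P := P) (n := n) (k := r + 1) (by omega)
  rw [expCcount, expCcount, ← hsum.tsum_sub hsum', ← tsum_div_const]
  refine (summable_occupancyProb_mul_pow hw hwp hr _).tsum_le_tsum (fun j ↦ ?_)
    ((hsum.sub hsum').div_const _)
  calc occupancyProb P n {0} j * w j ^ r
      ≤ pReal P j ^ r * occupancyProb P n {0} j := by
        rw [mul_comm]
        gcongr
        exacts [occupancyProb_nonneg _ _, hw j, hwp j]
    _ ≤ occupancyProb P n {r} j / n.choose r := pReal_pow_mul_occupancyProb_zero_le hrn j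
    _ = _ := by rw [occupancyProb_Ici_eq_add r, add_sub_cancel_right]

end Moments

section Counts

variable {P : PMF ℕ} {n : ℕ}

lemma Ccount_eq_tsum_indicator (ω : Fin n → ℕ) (k : ℕ) :
    Ccount ω k = ∑' j, {ω : Fin n → ℕ | freq ω j ∈ Set.Ici k}.indicator (fun _ ↦ 1) ω :=
  tsum_congr fun j ↦ by simp [Set.indicator_apply]

lemma summable_ite_le_freq (ω : Fin n → ℕ) {k : ℕ} (hk : 1 ≤ k) :
    Summable fun j ↦ if k ≤ freq ω j then (1 : ℝ) else 0 := by
  refine summable_of_ne_finset_zero (s := Finset.univ.image ω) fun j hj ↦ ?_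
  rw [freq_eq_zero_iff.2 (by simpa using hj), if_neg (by omega)]

lemma Ccount_nonneg (ω : Fin n → ℕ) (k : ℕ) : 0 ≤ Ccount ω k :=
  tsum_nonneg fun j ↦ by split_ifs <;> simp

lemma Mcount_eq_Ccount_sub_Ccount (ω : Fin n → ℕ) {k : ℕ} (hk : 1 ≤ k) :
    Mcount ω k = Ccount ω k - Ccount ω (k + 1) := by
  rw [Ccount, Ccount,
    ← (summable_ite_le_freq ω hk).tsum_sub (summable_ite_le_freq ω (by omega : 1 ≤ k + 1))]
  refine tsum_congr fun j ↦ ?_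
  split_ifs <;> first | omega | norm_num

variable {k : ℕ} {x : ℝ}

theorem measure_Ccount_le_le (hk : 1 ≤ k) (hkn : k ≤ n) (hx : 0 ≤ x) :
    sampleMeasure P n {ω | Ccount ω k ≤ expCcount P n k - √(2 * expCcount P n k * x)} ≤
      ENNReal.ofReal (exp (-x)) := by
  simp only [Ccount_eq_tsum_indicator]
  refine (hasSubmulMGF_freq P (.inl (isUpperSet_Ici k))).measure_bernstein_lower_le
    (fun _ ↦ .of_discrete) zero_le_one (expCcount_pos hk hkn) hx
    (ae_of_all _ fun ω ↦ ?_) ?_ ?_ ?_ ?_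
  · simpa [Set.indicator_apply] using summable_ite_le_freq ω hk
  all_goals simp only [one_pow, mul_one]
  exacts [summable_occupancyProb_Ici hk, le_rfl, summable_occupancyProb_Ici hk, le_rfl]

theorem measure_le_Ccount_le (hk : 1 ≤ k) (hkn : k ≤ n) (hx : 0 ≤ x) :
    sampleMeasure P n {ω | expCcount P n k + √(2 * expCcount P n k * x) + x ≤ Ccount ω k} ≤
      ENNReal.ofReal (exp (-x)) := by
  have h := (hasSubmulMGF_freq (n := n) P (.inl (isUpperSet_Ici k))).measure_bernstein_upper_le
    (w := fun _ ↦ 1) (b := 1) (m := expCcount P n k) (v := expCcount P n k) (fun _ ↦ .of_discrete)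
    (fun _ ↦ zero_le_one) (fun _ ↦ le_rfl) zero_le_one (expCcount_pos hk hkn) hx
    (ae_of_all _ fun ω ↦ ?_) ?_ ?_ ?_
  · simpa only [Ccount_eq_tsum_indicator, one_mul] using h
  · simpa [Set.indicator_apply] using summable_ite_le_freq ω hk
  all_goals simp only [one_pow, mul_one]
  exacts [summable_occupancyProb_Ici hk, le_rfl, le_rfl]

end Counts

section MissingMass

variable {P : PMF ℕ} {n : ℕ} {w : ℕ → ℝ} {r : ℕ}

lemma missingMass_eq_tsum_indicator (w : ℕ → ℝ) (r : ℕ) (ω : Fin n → ℕ) :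
    missingMass w r ω =
      ∑' j, {ω : Fin n → ℕ | freq ω j ∈ ({0} : Set ℕ)}.indicator (fun _ ↦ w j ^ r) ω :=
  tsum_congr fun j ↦ by simp [Set.indicator_apply]

lemma summable_missingMass (hw : 0 ≤ w) (hwp : w ≤ pReal P) (hr : 1 ≤ r) (ω : Fin n → ℕ) :
    Summable fun j ↦ {ω : Fin n → ℕ | freq ω j ∈ ({0} : Set ℕ)}.indicator (fun _ ↦ w j ^ r) ω :=
  (hasSum_pReal P).summable.of_nonneg_of_le
    (fun j ↦ Set.indicator_nonneg (fun _ _ ↦ pow_nonneg (hw j) r) ω)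
    fun j ↦ (Set.indicator_le_self' (fun _ _ ↦ pow_nonneg (hw j) r) ω).trans
      (pow_le_pReal hw hwp hr j)

lemma missingMass_le_one (hw : 0 ≤ w) (hwp : w ≤ pReal P) (hr : 1 ≤ r) (ω : Fin n → ℕ) :
    missingMass w r ω ≤ 1 := by
  rw [missingMass_eq_tsum_indicator, ← (hasSum_pReal P).tsum_eq]
  exact (summable_missingMass hw hwp hr ω).tsum_le_tsum
    (fun j ↦ (Set.indicator_le_self' (fun _ _ ↦ pow_nonneg (hw j) r) ω).trans
      (pow_le_pReal hw hwp hr j)) (hasSum_pReal P).summable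

theorem measure_le_missingMass_le (hw : 0 ≤ w) (hwp : w ≤ pReal P) {a : ℝ} (hwa : ∀ j, w j ≤ a)
    (hr : 1 ≤ r) (hn : 2 * r ≤ n) {x : ℝ} (hx : 0 ≤ x) :
    sampleMeasure P n {ω | (expCcount P n r - expCcount P n (r + 1)) / n.choose r +
      √(2 * (expCcount P n r / n.choose (2 * r)) * x) + a ^ r * x ≤ missingMass w r ω} ≤
      ENNReal.ofReal (exp (-x)) := by
  have hchoose : (0 : ℝ) < n.choose (2 * r) := by exact_mod_cast Nat.choose_pos hn
  have hpos := expCcount_pos (P := P) hr (by omega : r ≤ n)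
  have hvar : ∑' j, occupancyProb P n {0} j * (w j ^ r) ^ 2 ≤
      expCcount P n r / n.choose (2 * r) := by
    simp only [← pow_mul, mul_comm r 2]
    refine (tsum_occupancyProb_zero_mul_pow_le hw hwp (by omega) hn).trans ?_
    gcongr
    linarith [expCcount_nonneg (P := P) (n := n) (2 * r + 1),
      expCcount_anti (P := P) (n := n) hr (by omega : r ≤ 2 * r)]
  have hlower : IsLowerSet ({0} : Set ℕ) := fun _ _ hab ha ↦ Nat.le_zero.1 (hab.trans_eq ha)
  simp only [missingMass_eq_tsum_indicator]
  exact (hasSubmulMGF_freq P (.inr hlower)).measure_bernstein_upper_le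
    (fun _ ↦ .of_discrete) (fun j ↦ pow_nonneg (hw j) r) (fun j ↦ pow_le_pow_left₀ (hw j) (hwa j) r)
    (pow_nonneg ((hw 0).trans (hwa 0)) r) (by positivity) hx
    (ae_of_all _ (summable_missingMass hw hwp hr)) (summable_occupancyProb_mul_pow hw hwp hr _)
    (tsum_occupancyProb_zero_mul_pow_le hw hwp hr (by omega)) hvar

lemma occupancyProb_zero_le_exp {a : ℝ} {j : ℕ} (ha : a ≤ pReal P j) :
    occupancyProb P n {0} j ≤ exp (-(n * a)) := by
  rw [occupancyProb_zero, ← mul_neg, exp_nat_mul]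
  have := pReal_le_one P j
  gcongr
  linarith [add_one_le_exp (-a)]

theorem measure_exists_unseen_le {a : ℝ} (ha : 0 < a) :
    sampleMeasure P n {ω | ∃ j, a ≤ pReal P j ∧ freq ω j = 0} ≤
      ENNReal.ofReal (exp (-(n * a)) / a) := by
  have hc : 0 ≤ exp (-(n * a)) / a := by positivity
  have hterm : ∀ j, sampleMeasure P n {ω | a ≤ pReal P j ∧ freq ω j = 0} ≤
      ENNReal.ofReal (exp (-(n * a)) / a * pReal P j) := fun j ↦ by
    by_cases hj : a ≤ pReal P j
    · simp only [hj, true_and]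
      change sampleMeasure P n {ω | freq ω j ∈ ({0} : Set ℕ)} ≤ _
      rw [← ofReal_measureReal]
      refine ENNReal.ofReal_le_ofReal ((occupancyProb_zero_le_exp hj).trans ?_)
      rw [div_mul_eq_mul_div, le_div_iff₀ ha]
      gcongr
    · simp [hj]
  calc sampleMeasure P n {ω | ∃ j, a ≤ pReal P j ∧ freq ω j = 0}
      = sampleMeasure P n (⋃ j, {ω | a ≤ pReal P j ∧ freq ω j = 0}) := by
        congr 1
        ext
        simp
    _ ≤ ∑' j, ENNReal.ofReal (exp (-(n * a)) / a * pReal P j) :=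
        (measure_iUnion_le _).trans (ENNReal.tsum_le_tsum hterm)
    _ = ENNReal.ofReal (exp (-(n * a)) / a) := by
        rw [← ENNReal.ofReal_tsum_of_nonneg (fun j ↦ mul_nonneg hc (pReal_nonneg P j))
          ((hasSum_pReal P).summable.mul_left _), tsum_mul_left, (hasSum_pReal P).tsum_eq, mul_one]

lemma missingMass_min_eq {a : ℝ} {ω : Fin n → ℕ} (h : ∀ j, a ≤ pReal P j → freq ω j ≠ 0) :
    missingMass (fun j ↦ min (pReal P j) a) r ω = missingMass (pReal P) r ω :=
  tsum_congr fun j ↦ by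
    rcases le_total a (pReal P j) with hj | hj
    · simp [h j hj]
    · simp only [min_eq_left hj]

end MissingMass

section Deterministic

lemma sqrt_mul_le_of_sub_sqrt_le {N C x : ℝ} (hN : 0 ≤ N) (hC : 0 ≤ C) (hx : 0 ≤ x)
    (h : N - √(2 * N * x) ≤ C) : √(N * x) ≤ √(C * x) + √2 * x := by
  rw [mul_assoc, sqrt_mul two_pos.le] at h
  have hy := mul_self_sqrt (mul_nonneg hN hx)
  have hz := mul_self_sqrt (mul_nonneg hC hx)
  set y := √(N * x)
  set z := √(C * x)
  have hquad : y * (y - √2 * x) ≤ z * z := by nlinarith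
  by_contra! hlt
  have hz0 : 0 ≤ z := sqrt_nonneg _
  have hsx : 0 ≤ √2 * x := by positivity
  nlinarith

variable {P : PMF ℕ} {n r : ℕ} {x : ℝ} {ω : Fin n → ℕ}

lemma expCcount_sub_expCcount_le (hr : 1 ≤ r) (hx : 0 ≤ x)
    (hC : expCcount P n r - √(2 * expCcount P n r * x) ≤ Ccount ω r)
    (hC' : Ccount ω (r + 1) ≤ expCcount P n (r + 1) + √(2 * expCcount P n (r + 1) * x) + x) :
    expCcount P n r - expCcount P n (r + 1) ≤
      Mcount ω r + 2 * √2 * √(Ccount ω r * x) + 5 * x := by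
  have hN := expCcount_nonneg (P := P) (n := n) r
  have hanti : √(2 * expCcount P n (r + 1) * x) ≤ √(2 * expCcount P n r * x) := by
    gcongr
    exact expCcount_anti hr r.le_succ
  have hkey := mul_le_mul_of_nonneg_left
    (sqrt_mul_le_of_sub_sqrt_le hN (Ccount_nonneg ω r) hx hC) (sqrt_nonneg 2)
  have htwo : √2 * (√2 * x) = 2 * x := by rw [← mul_assoc, mul_self_sqrt two_pos.le]
  rw [Mcount_eq_Ccount_sub_Ccount ω hr]
  have hsplit : √(2 * expCcount P n r * x) = √2 * √(expCcount P n r * x) := by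
    rw [mul_assoc, sqrt_mul two_pos.le]
  linarith

lemma sqrt_two_mul_div_mul_le {N C m : ℝ} (hN : 0 ≤ N) (hC : 0 ≤ C) (hm : 0 ≤ m) (hx : 0 ≤ x)
    (h : N - √(2 * N * x) ≤ C) :
    √(2 * (N / m) * x) ≤ √(2 / m) * √(C * x) + 2 / √m * x :=
  calc √(2 * (N / m) * x) = √(2 / m) * √(N * x) := by
        rw [← sqrt_mul (by positivity)]
        ring_nf
    _ ≤ √(2 / m) * (√(C * x) + √2 * x) := by
        gcongr
        exact sqrt_mul_le_of_sub_sqrt_le hN hC hx h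
    _ = √(2 / m) * √(C * x) + √2 * √2 / √m * x := by
        rw [sqrt_div two_pos.le]
        ring
    _ = √(2 / m) * √(C * x) + 2 / √m * x := by rw [mul_self_sqrt two_pos.le]

lemma missingMass_le_Ubound {p : ℕ → ℝ} (hr : 1 ≤ r) (hx : 0 ≤ x)
    (hC : expCcount P n r - √(2 * expCcount P n r * x) ≤ Ccount ω r)
    (hC' : Ccount ω (r + 1) ≤ expCcount P n (r + 1) + √(2 * expCcount P n (r + 1) * x) + x)
    (hθ : missingMass p r ω ≤ (expCcount P n r - expCcount P n (r + 1)) / n.choose r +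
      √(2 * (expCcount P n r / n.choose (2 * r)) * x) + ((x + log n) / n) ^ r * x) :
    missingMass p r ω ≤ Ubound r x ω := by
  have hmean : (expCcount P n r - expCcount P n (r + 1)) / n.choose r ≤
      Mcount ω r / n.choose r + 2 * √2 / n.choose r * √(Ccount ω r * x) + 5 / n.choose r * x :=
    (div_le_div_of_nonneg_right (expCcount_sub_expCcount_le hr hx hC hC')
      (n.choose r).cast_nonneg).trans_eq (by ring)
  have hdev := sqrt_two_mul_div_mul_le (expCcount_nonneg r) (Ccount_nonneg ω r)
    (n.choose (2 * r)).cast_nonneg hx hC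
  have htail : ((x + log n) / n) ^ r * x ≤ ((x + log n) / n) ^ r * (2 ^ (r + 1) * x / 3) := by
    have : 0 ≤ log n := log_natCast_nonneg n
    have hpow : (2 : ℝ) ^ 2 ≤ 2 ^ (r + 1) := pow_le_pow_right₀ one_le_two (by omega)
    gcongr
    nlinarith
  have hslack : 2 / √(n.choose (2 * r)) * x + 5 / n.choose r * x ≤
      (4 / √(n.choose (2 * r)) + 26 / 3 / n.choose r) * x := by
    rw [← add_mul]
    gcongr <;> norm_num
  rw [Ubound, gtEst]
  linarith

lemma missingMass_le_min_Ubound_one (hr : 1 ≤ r) (hx : 0 ≤ x)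
    (hC : expCcount P n r - √(2 * expCcount P n r * x) ≤ Ccount ω r)
    (hC' : Ccount ω (r + 1) ≤ expCcount P n (r + 1) + √(2 * expCcount P n (r + 1) * x) + x)
    (hθ : missingMass (fun j ↦ min (pReal P j) ((x + log n) / n)) r ω ≤
      (expCcount P n r - expCcount P n (r + 1)) / n.choose r +
        √(2 * (expCcount P n r / n.choose (2 * r)) * x) + ((x + log n) / n) ^ r * x)
    (hseen : ∀ j, (x + log n) / n ≤ pReal P j → freq ω j ≠ 0) :
    missingMass (pReal P) r ω ≤ min (Ubound r x ω) 1 := by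
  rw [missingMass_min_eq hseen] at hθ
  exact le_min (missingMass_le_Ubound hr hx hC hC' hθ)
    (missingMass_le_one (pReal_nonneg P) le_rfl hr ω)

end Deterministic

section Probability

lemma one_sub_card_mul_le_measure {Ω ι : Type*} [MeasurableSpace Ω] {μ : Measure Ω}
    [IsProbabilityMeasure μ] [Fintype ι] {B : ι → Set Ω} {G : Set Ω} {p : ℝ≥0∞}
    (hB : ∀ i, μ (B i) ≤ p) (hG : ∀ ω, (∀ i, ω ∉ B i) → ω ∈ G) :
    1 - Fintype.card ι * p ≤ μ G := by
  have hcover : Set.univ ⊆ G ∪ ⋃ i, B i := fun ω _ ↦ by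
    by_cases h : ∃ i, ω ∈ B i
    · exact .inr (Set.mem_iUnion.2 h)
    · exact .inl (hG ω (not_exists.1 h))
  rw [tsub_le_iff_right]
  calc 1 = μ Set.univ := measure_univ.symm
    _ ≤ μ G + μ (⋃ i, B i) := (measure_mono hcover).trans (measure_union_le _ _)
    _ ≤ μ G + ∑ i, μ (B i) := by gcongr; exact measure_iUnion_fintype_le _ _
    _ ≤ μ G + Fintype.card ι * p := by
        gcongr
        simpa using Finset.sum_le_card_nsmul Finset.univ _ _ fun i _ ↦ hB i

lemma one_le_ofReal_four_mul_exp_neg {x : ℝ} (hx : x ≤ 1) :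
    1 ≤ ENNReal.ofReal (4 * exp (-x)) := by
  rw [ENNReal.one_le_ofReal]
  calc (1 : ℝ) = exp x * exp (-x) := by rw [← exp_add, add_neg_cancel, exp_zero]
    _ ≤ exp 1 * exp (-x) := by gcongr
    _ ≤ 4 * exp (-x) := by gcongr; linarith [exp_one_lt_d9]

variable {P : PMF ℕ} {n r : ℕ} {x : ℝ}

lemma measure_exists_log_div_le_unseen_le (hn : 1 ≤ n) (hx : 1 ≤ x) :
    sampleMeasure P n {ω | ∃ j, (x + log n) / n ≤ pReal P j ∧ freq ω j = 0} ≤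
      ENNReal.ofReal (exp (-x)) := by
  have hn0 : (0 : ℝ) < n := by exact_mod_cast hn
  have hlog : 0 ≤ log n := log_natCast_nonneg n
  refine (measure_exists_unseen_le (by positivity)).trans (ENNReal.ofReal_le_ofReal ?_)
  calc exp (-(n * ((x + log n) / n))) / ((x + log n) / n)
      = exp (-x) / (x + log n) := by
        rw [mul_div_cancel₀ _ hn0.ne', neg_add, exp_add, exp_neg (log n), exp_log hn0]
        field_simp
    _ ≤ exp (-x) := div_le_self (exp_pos _).le (by linarith)

end Probability

theorem missingMass_confidence_upper_general (P : PMF ℕ) (r n : ℕ) (hr : 1 ≤ r) (hn : 2 * r ≤ n)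
    (x : ℝ) :
    1 - ENNReal.ofReal (4 * exp (-x)) ≤
      sampleMeasure P n {ω | missingMass (pReal P) r ω ≤ min (Ubound r x ω) 1} := by
  obtain hx | hx := le_total x 1
  · exact (tsub_eq_zero_of_le (one_le_ofReal_four_mul_exp_neg hx)).trans_le zero_le
  set a := (x + log n) / n
  have hx0 : 0 ≤ x := zero_le_one.trans hx
  have ha : 0 ≤ a := by positivity
  set E := expCcount P n
  let bad : Fin 4 → Set (Fin n → ℕ) :=
    ![{ω | Ccount ω r ≤ E r - √(2 * E r * x)},
      {ω | E (r + 1) + √(2 * E (r + 1) * x) + x ≤ Ccount ω (r + 1)},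
      {ω | (E r - E (r + 1)) / n.choose r + √(2 * (E r / n.choose (2 * r)) * x) + a ^ r * x ≤
        missingMass (fun j ↦ min (pReal P j) a) r ω},
      {ω | ∃ j, a ≤ pReal P j ∧ freq ω j = 0}]
  have hbad : ∀ i, sampleMeasure P n (bad i) ≤ ENNReal.ofReal (exp (-x)) := by
    simp only [Fin.forall_fin_succ, bad]
    exact ⟨measure_Ccount_le_le hr (by omega) hx0, measure_le_Ccount_le (by omega) (by omega) hx0,
      measure_le_missingMass_le (fun j ↦ le_min (pReal_nonneg P j) ha) (fun j ↦ min_le_left _ _)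
        (fun j ↦ min_le_right _ _) hr hn hx0,
      measure_exists_log_div_le_unseen_le (by omega) hx, fun i ↦ i.elim0⟩
  rw [ENNReal.ofReal_mul zero_le_four, ENNReal.ofReal_ofNat]
  refine one_sub_card_mul_le_measure hbad fun ω hω ↦ ?_
  exact missingMass_le_min_Ubound_one hr hx0 (not_le.1 (hω 0)).le (not_le.1 (hω 1)).le
    (not_le.1 (hω 2)).le fun j ha h ↦ hω 3 ⟨j, ha, h⟩

/-- Upper confidence bound for the `r`-order missing mass: with probability at least
`1 - 7 e^{-x}`, we have `θ_r(P;X_n) ≤ min(𝔘_{n,r}(x), 1)`. -/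
theorem missingMass_confidence_upper (P : PMF ℕ) (r n : ℕ) (hr : 1 ≤ r) (hn : 2 * r < n)
    (x : ℝ) (hx : 0 < x) :
    1 - ENNReal.ofReal (7 * Real.exp (-x)) ≤
      sampleMeasure P n
        {ω | missingMass (pReal P) r ω ≤ min (Ubound r x ω) 1} :=
  (tsub_le_tsub_left (by gcongr; norm_num) 1).trans
    (missingMass_confidence_upper_general P r n hr hn.le x)

end
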